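/- Let A be a complex unital semisimple Banach algebra, let B be a complex unital Banach algebra possessing a separating family of finite-dimensional irreducible representations, and let T : A → B be a linear, unital, surjective map satisfying ρ(T(a)) = ρ(a) for every a ∈ A. For a fixed a ∈ A, let A₁ = {a}^{cc} be the double commutant of a in A (the set of all elements of A commuting with every element of A that commutes with a). Then B₁ := T(A₁) is a closed (unital) subalgebra of B; in particular B₁ is closed under multiplication. -/

import Mathlib

/-!
The point is that `T` and its inverse preserve commutativity, so `T` carries centralizers to
centralizers, which are closed subalgebras. Let `φ = π i ∘ T`. Along `exp (-tu) x exp (tu)` the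
spectral radius is constant, so by Liouville the power traces of its image under `φ` are constant.
Differentiating, the commutator of `A` descends along `φ` to an alternating operation `β` on
matrices with `tr (X β(X, U)) = tr (X² β(X, U)) = 0`. Polarizing these identities makes `β(·, U)` a
Jordan derivation, hence a derivation by Herstein's theorem, and Brešar's identity
`[X, Y] Z β(U, V) = β(X, Y) Z [U, V]` shows that `β` is either zero or vanishes exactly on commuting
pairs. Injectivity of `T` on the semisimple algebra `A` comes from Zemánek's characterisation of the
radical.

A representation with `β = 0` says nothing about `[T x, T y]` when `x` and `y` commute. There one
shows that `[T x, T y]` is the image of a central element, that `T` maps the centre into the centre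
(by Liouville again, as `ρ(s + w) ≤ ρ(s) + ρ(w)` for central `s`), and that a central matrix of
trace zero vanishes.
-/

open scoped NNReal ENNReal

theorem eq_zero_or_eq_zero_of_forall_apply_eq_zero {M N P Q : Type*} [AddCommGroup M]
    [AddCommGroup N] [AddCommGroup P] [AddCommGroup Q] (f : M →+ N →+ P) (g : M →+ N →+ Q)
    (h : ∀ a b, f a b = 0 ∨ g a b = 0) : f = 0 ∨ g = 0 := by
  have hrow : ∀ a, f a = 0 ∨ g a = 0 := fun a => by
    have hker : ((⊤ : AddSubgroup N) : Set N) ⊆ (f a).ker ∪ (g a).ker := fun b _ => h a b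
    refine (AddSubgroupClass.subset_union.1 hker).imp (fun hf => ?_) (fun hg => ?_)
    · exact AddMonoidHom.ext fun b => hf (AddSubgroup.mem_top b)
    · exact AddMonoidHom.ext fun b => hg (AddSubgroup.mem_top b)
  have hker : ((⊤ : AddSubgroup M) : Set M) ⊆ f.ker ∪ g.ker := fun a _ => hrow a
  refine (AddSubgroupClass.subset_union.1 hker).imp (fun hf => ?_) (fun hg => ?_)
  · exact AddMonoidHom.ext fun a => hf (AddSubgroup.mem_top a)
  · exact AddMonoidHom.ext fun a => hg (AddSubgroup.mem_top a)

section PrimeRing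

variable {R : Type*} [Ring R]

/-- Primeness of a possibly noncommutative ring, in the elementwise form used by Herstein. -/
def IsPrimeRing (R : Type*) [Ring R] : Prop :=
  ∀ p q : R, (∀ c, p * c * q = 0) → p = 0 ∨ q = 0

theorem IsPrimeRing.eq_zero_or_eq_zero_of_mul_mul_add_mul_mul_eq_zero (hR : IsPrimeRing R)
    (h2 : IsSMulRegular R 2) {p q : R} (h : ∀ c, p * c * q + q * c * p = 0) : p = 0 ∨ q = 0 := by
  have hqqp : ∀ c c', q * c * (q * c' * p) = 0 := by
    intro c c'
    apply h2.right_eq_zero_of_smul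
    linear_combination (norm := noncomm_ring)
      h (c * q * c') - h c * (c' * q) + q * c * h c'
  by_cases hq : q = 0
  · exact Or.inr hq
  · have hqp : ∀ c', q * c' * p = 0 := fun c' => (hR q _ fun c => hqqp c c').resolve_left hq
    exact Or.inl ((hR q p hqp).resolve_left hq)

/-- A Jordan derivation: an additive map satisfying the Leibniz rule on squares. -/
def IsJordanDerivation (D : R →+ R) : Prop :=
  ∀ a, D (a * a) = D a * a + a * D a

/-- The biadditive map `(a, b) ↦ D (a * b) - D a * b - a * D b` measuring how far `D` is from
being a derivation. -/
def leibnizDefect (D : R →+ R) : R →+ R →+ R :=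
  AddMonoidHom.mul.compr₂ D - AddMonoidHom.mul.comp D - AddMonoidHom.mul.compl₂ D

theorem leibnizDefect_apply (D : R →+ R) (a b : R) :
    leibnizDefect D a b = D (a * b) - D a * b - a * D b :=
  rfl

namespace IsJordanDerivation

variable {D : R →+ R} (hD : IsJordanDerivation D)
include hD

theorem map_mul_add_map_mul (a b : R) :
    D (a * b) + D (b * a) = D a * b + a * D b + D b * a + b * D a := by
  have h := hD (a + b)
  simp only [add_mul, mul_add, map_add] at h
  linear_combination (norm := noncomm_ring) h - hD a - hD b

theorem map_mul_mul_self (h2 : IsSMulRegular R 2) (a b : R) :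
    D (a * b * a) = D a * b * a + a * D b * a + a * b * D a := by
  have h1 := hD.map_mul_add_map_mul a (a * b + b * a)
  have h3 := hD.map_mul_add_map_mul (a * a) b
  have h4 := congrArg (· * a) (hD.map_mul_add_map_mul a b)
  have h5 := congrArg (a * ·) (hD.map_mul_add_map_mul a b)
  have h6 := congrArg (· * b) (hD a)
  have h7 := congrArg (b * ·) (hD a)
  simp only [mul_add, add_mul, map_add, ← mul_assoc] at h1 h3 h4 h5 h6 h7
  rw [← sub_eq_zero]
  apply h2.right_eq_zero_of_smul
  linear_combination (norm := noncomm_ring) h1 - h3 + h4 + h5 - h6 - h7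

theorem map_mul_mul_add_map_mul_mul (h2 : IsSMulRegular R 2) (a b c : R) :
    D (a * b * c) + D (c * b * a) =
      D a * b * c + a * D b * c + a * b * D c + D c * b * a + c * D b * a + c * b * D a := by
  have h := hD.map_mul_mul_self h2 (a + c) b
  simp only [add_mul, mul_add, map_add] at h
  linear_combination (norm := noncomm_ring)
    h - hD.map_mul_mul_self h2 a b - hD.map_mul_mul_self h2 c b

theorem leibnizDefect_mul_mul_lie_add (h2 : IsSMulRegular R 2) (a b c : R) :
    leibnizDefect D a b * c * ⁅a, b⁆ + ⁅a, b⁆ * c * leibnizDefect D a b = 0 := by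
  -- Compute `D (a * b * c * b * a + b * a * c * a * b)` in two ways.
  have houter := hD.map_mul_mul_add_map_mul_mul h2 (a * b) c (b * a)
  have ha := hD.map_mul_mul_self h2 a (b * c * b)
  have hb := hD.map_mul_mul_self h2 b (a * c * a)
  rw [hD.map_mul_mul_self h2 b c] at ha
  rw [hD.map_mul_mul_self h2 a c] at hb
  have hba : D (b * a) = D a * b + a * D b + D b * a + b * D a - D (a * b) :=
    eq_sub_of_add_eq' (hD.map_mul_add_map_mul a b)
  rw [hba] at houter
  simp only [← mul_assoc] at houter ha hb
  simp only [leibnizDefect_apply, Ring.lie_def]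
  linear_combination (norm := noncomm_ring) houter - ha - hb

/-- Herstein's theorem: for fixed `a, b` primeness kills the defect or the commutator, and a group
is not a union of two proper subgroups, so either the defect vanishes or `R` is commutative. -/
theorem map_mul (hR : IsPrimeRing R) (h2 : IsSMulRegular R 2) (a b : R) :
    D (a * b) = D a * b + a * D b := by
  let lie : R →+ R →+ R := AddMonoidHom.mul - AddMonoidHom.mul.flip
  obtain hδ | hlie := eq_zero_or_eq_zero_of_forall_apply_eq_zero (leibnizDefect D) lie
    fun a b => hR.eq_zero_or_eq_zero_of_mul_mul_add_mul_mul_eq_zero h2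
      (hD.leibnizDefect_mul_mul_lie_add h2 a b)
  · have hab : D (a * b) - D a * b - a * D b = 0 :=
      DFunLike.congr_fun (DFunLike.congr_fun hδ a) b
    rwa [sub_sub, sub_eq_zero] at hab
  · have hcomm : ∀ x y : R, x * y = y * x := fun x y =>
      sub_eq_zero.1 (DFunLike.congr_fun (DFunLike.congr_fun hlie x) y)
    have h := hD.map_mul_add_map_mul a b
    rw [hcomm b a, hcomm (D b) a, hcomm b (D a)] at h
    rw [← sub_eq_zero]
    apply h2.right_eq_zero_of_smul
    linear_combination (norm := noncomm_ring) h

end IsJordanDerivation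

/-- A biderivation: a map obeying the Leibniz rule in each of its two arguments. Additivity is not
part of the structure; where needed it comes from the type of `β`. -/
structure IsBiderivation (β : R → R → R) : Prop where
  mul_left : ∀ x y z, β (x * y) z = β x z * y + x * β y z
  mul_right : ∀ x y z, β x (y * z) = β x y * z + y * β x z

namespace IsBiderivation

variable {β : R → R → R} (hβ : IsBiderivation β)
include hβ

theorem lie_mul_apply (x y u v : R) : ⁅x, y⁆ * β u v = β x y * ⁅u, v⁆ := by
  -- Expand `β (x * u) (y * v)` in the two possible orders.
  have h := hβ.mul_right (x * u) y v
  simp only [hβ.mul_left, hβ.mul_right, add_mul, mul_add] at h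
  rw [Ring.lie_def, Ring.lie_def]
  linear_combination (norm := noncomm_ring) h

theorem lie_mul_mul_apply (x y z u v : R) : ⁅x, y⁆ * z * β u v = β x y * z * ⁅u, v⁆ := by
  have h := hβ.lie_mul_apply x y (z * u) v
  have hz := congrArg (· * u) (hβ.lie_mul_apply x y z v)
  simp only [hβ.mul_left, Ring.lie_def] at h hz ⊢
  linear_combination (norm := noncomm_ring) h - hz

theorem apply_eq_zero_iff_commute (hR : IsPrimeRing R) {u v u' v' : R} (hne : β u v ≠ 0)
    (hnc : ¬Commute u' v') (x y : R) : β x y = 0 ↔ Commute x y := by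
  rw [commute_iff_lie_eq] at hnc ⊢
  constructor
  · intro hxy
    refine (hR _ _ fun z => ?_).resolve_right hne
    rw [hβ.lie_mul_mul_apply, hxy, zero_mul, zero_mul]
  · intro hxy
    refine (hR _ _ fun z => ?_).resolve_right hnc
    rw [← hβ.lie_mul_mul_apply, hxy, zero_mul, zero_mul]

end IsBiderivation

end PrimeRing

section Matrix

variable {K m : Type*} [CommRing K] [Fintype m]

theorem isPrimeRing_matrix [DecidableEq m] [NoZeroDivisors K] : IsPrimeRing (Matrix m m K) := by
  intro p q h
  by_contra! ⟨hp, hq⟩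
  simp only [ne_eq, ← Matrix.ext_iff, Matrix.zero_apply, not_forall] at hp hq
  obtain ⟨i, j, hij⟩ := hp
  obtain ⟨k, l, hkl⟩ := hq
  have hentry : (p * Matrix.single j k 1 * q : Matrix m m K) i l = p i j * q k l := by
    simp [Matrix.mul_apply, Matrix.single_apply, ite_and]
  rw [h, Matrix.zero_apply, eq_comm] at hentry
  exact mul_ne_zero hij hkl hentry

theorem matrix_eq_zero_of_mem_center_of_trace_eq_zero [NoZeroDivisors K] [CharZero K]
    {M : Matrix m m K} (hM : M ∈ Set.center (Matrix m m K)) (htr : M.trace = 0) : M = 0 := by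
  classical
  rw [Matrix.center_eq_scalar_image] at hM
  obtain ⟨c, -, rfl⟩ := hM
  have hcard : (Fintype.card m : K) * c = 0 := by
    simpa [Matrix.scalar_apply, Matrix.trace_diagonal] using htr
  rcases mul_eq_zero.1 hcard with h0 | rfl
  · have : IsEmpty m := Fintype.card_eq_zero_iff.1 (Nat.cast_eq_zero.1 h0)
    exact Subsingleton.elim _ _
  · exact map_zero _

/-- An alternating bilinear operation on matrices such that each `X ↦ β X U`, regarded as a vector
field, preserves the power traces `tr X ^ 2` and `tr X ^ 3`. It models what the commutator of an
algebra becomes on a matrix quotient that respects spectral radii. -/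
structure IsTraceNullBracket
    (β : Matrix m m K →ₗ[K] Matrix m m K →ₗ[K] Matrix m m K) : Prop where
  isAlt : β.IsAlt
  trace_mul : ∀ X U, (X * β X U).trace = 0
  trace_mul_mul : ∀ X U, (X * X * β X U).trace = 0

namespace IsTraceNullBracket

variable {β : Matrix m m K →ₗ[K] Matrix m m K →ₗ[K] Matrix m m K} (hβ : IsTraceNullBracket β)
include hβ

theorem exists_not_commute (hne : β ≠ 0) : ∃ U V : Matrix m m K, ¬Commute U V := by
  classical
  contrapose! hne
  have hscalar : ∀ U : Matrix m m K, ∃ c : K, c • 1 = U := fun U => by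
    have hU : U ∈ Set.center (Matrix m m K) :=
      Semigroup.mem_center_iff.2 fun V => (hne V U).eq
    rw [Matrix.center_eq_scalar_image] at hU
    obtain ⟨c, -, rfl⟩ := hU
    exact ⟨c, by rw [Matrix.scalar_apply, Matrix.smul_one_eq_diagonal]⟩
  refine LinearMap.ext₂ fun U V => ?_
  obtain ⟨c, rfl⟩ := hscalar U
  obtain ⟨d, rfl⟩ := hscalar V
  simp [hβ.isAlt.self_eq_zero]

theorem trace_mul_comm (X Z U : Matrix m m K) :
    (X * β Z U).trace = -(Z * β X U).trace := by
  have h := hβ.trace_mul (X + Z) U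
  simp only [map_add, LinearMap.add_apply, mul_add, add_mul, Matrix.trace_add,
    hβ.trace_mul] at h
  linear_combination h

variable [NoZeroDivisors K] [NeZero (2 : K)]

theorem trace_mul_self_mul (X Z U : Matrix m m K) :
    (X * X * β Z U).trace = -((X * Z + Z * X) * β X U).trace := by
  have hadd := hβ.trace_mul_mul (X + Z) U
  have hsub := hβ.trace_mul_mul (X - Z) U
  simp only [map_add, map_sub, LinearMap.add_apply, LinearMap.sub_apply, mul_add, add_mul,
    mul_sub, sub_mul, Matrix.trace_add, Matrix.trace_sub, hβ.trace_mul_mul] at hadd hsub ⊢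
  refine mul_left_cancel₀ (two_ne_zero' K) ?_
  linear_combination hadd - hsub

theorem isJordanDerivation [DecidableEq m] (U : Matrix m m K) :
    IsJordanDerivation (β.flip U).toAddMonoidHom := by
  intro X
  change β (X * X) U = β X U * X + X * β X U
  refine Matrix.ext_iff_trace_mul_left.2 fun Z => ?_
  calc (Z * β (X * X) U).trace = ((X * Z + Z * X) * β X U).trace := by
        rw [hβ.trace_mul_comm, hβ.trace_mul_self_mul, neg_neg]
    _ = (Z * (β X U * X + X * β X U)).trace := by
        rw [add_mul, mul_add, Matrix.trace_add, Matrix.trace_add, Matrix.mul_assoc X,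
          Matrix.trace_mul_comm X, Matrix.mul_assoc, Matrix.mul_assoc]

theorem isBiderivation [DecidableEq m] : IsBiderivation fun X Y => β X Y := by
  have h2 : IsSMulRegular (Matrix m m K) 2 := by
    intro X Y hXY
    ext i j
    simpa [two_ne_zero' K] using congrFun (congrFun hXY i) j
  have hleft : ∀ X Y U, β (X * Y) U = β X U * Y + X * β Y U := fun X Y U =>
    (hβ.isJordanDerivation U).map_mul isPrimeRing_matrix h2 X Y
  refine ⟨hleft, fun X Y U => ?_⟩
  rw [← hβ.isAlt.neg, hleft, ← hβ.isAlt.neg X Y, ← hβ.isAlt.neg X U]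
  noncomm_ring

theorem apply_eq_zero_iff_commute (hne : β ≠ 0) {X Y : Matrix m m K} :
    β X Y = 0 ↔ Commute X Y := by
  classical
  obtain ⟨U, V, hUV⟩ : ∃ U V, β U V ≠ 0 := by
    by_contra! h0
    exact hne (LinearMap.ext₂ h0)
  obtain ⟨U', V', hnc⟩ := hβ.exists_not_commute hne
  exact hβ.isBiderivation.apply_eq_zero_iff_commute isPrimeRing_matrix hUV hnc X Y

end IsTraceNullBracket

end Matrix

section SpectralRadius

variable {𝕜 A : Type*} [NormedField 𝕜] [NormedRing A] [NormedAlgebra 𝕜 A]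

theorem nnnorm_le_spectralRadius_of_mem {a : A} {k : 𝕜} (hk : k ∈ spectrum 𝕜 a) :
    (‖k‖₊ : ℝ≥0∞) ≤ spectralRadius 𝕜 a :=
  le_iSup₂ (f := fun k (_ : k ∈ spectrum 𝕜 a) => (‖k‖₊ : ℝ≥0∞)) k hk

theorem spectralRadius_algHom_apply_le {B : Type*} [Ring B] [Algebra 𝕜 B] (φ : A →ₐ[𝕜] B) (a : A) :
    spectralRadius 𝕜 (φ a) ≤ spectralRadius 𝕜 a :=
  biSup_mono fun _ hk => AlgHom.spectrum_apply_subset φ a hk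

theorem isUnit_one_sub_of_spectralRadius_lt_one {a : A} (ha : spectralRadius 𝕜 a < 1) :
    IsUnit (1 - a) := by
  have h := spectrum.mem_resolventSet_of_spectralRadius_lt (k := (1 : 𝕜)) (by simpa using ha)
  simpa [spectrum.mem_resolventSet_iff] using h

theorem isUnit_one_add_of_spectralRadius_lt_one {a : A} (ha : spectralRadius 𝕜 a < 1) :
    IsUnit (1 + a) := by
  have h := spectrum.mem_resolventSet_of_spectralRadius_lt (k := (-1 : 𝕜)) (by simpa using ha)
  simpa [spectrum.mem_resolventSet_iff, add_comm] using h.neg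

theorem spectralRadius_eq_zero_of_forall_isUnit {a : A} (ha : ∀ c : 𝕜, IsUnit (1 + c • a)) :
    spectralRadius 𝕜 a = 0 := by
  refine le_antisymm (iSup₂_le fun k hk => ?_) zero_le
  by_contra! hk0
  have hk1 : k ≠ 0 := by
    rintro rfl
    simp at hk0
  refine hk ?_
  have hunit := (ha (-k⁻¹)).smul (Units.mk0 k hk1)
  rwa [Units.smul_mk0, smul_add, smul_smul, mul_neg, mul_inv_cancel₀ hk1, neg_one_smul,
    ← sub_eq_add_neg, ← Algebra.algebraMap_eq_smul_one] at hunit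

theorem spectralRadius_resolvent_le {a : A} {k : 𝕜} (hk : spectralRadius 𝕜 a < ‖k‖₊) :
    spectralRadius 𝕜 (resolvent a k) ≤ (‖k‖₊ - spectralRadius 𝕜 a)⁻¹ := by
  have hres : k ∈ resolventSet 𝕜 a := spectrum.mem_resolventSet_of_spectralRadius_lt hk
  rw [spectrum.resolvent_eq hres]
  refine iSup₂_le fun μ hμ => ?_
  have hμ0 : μ ≠ 0 := spectrum.ne_zero_of_mem_of_unit hμ
  rw [← spectrum.map_inv, Set.mem_inv, hres.unit_spec, ← spectrum.singleton_sub_eq,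
    Set.singleton_sub] at hμ
  obtain ⟨ν, hν, hμν⟩ := hμ
  rw [ENNReal.le_inv_iff_le_inv, tsub_le_iff_left, ← ENNReal.coe_inv (nnnorm_ne_zero_iff.2 hμ0),
    ← nnnorm_inv]
  calc (‖k‖₊ : ℝ≥0∞) ≤ ‖ν‖₊ + ‖μ⁻¹‖₊ := by
        rw [← hμν]
        exact_mod_cast nnnorm_le_nnnorm_add_nnnorm_sub' k ν
    _ ≤ spectralRadius 𝕜 a + ‖μ⁻¹‖₊ := by
        gcongr
        exact nnnorm_le_spectralRadius_of_mem hν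

variable [CompleteSpace A]

theorem spectralRadius_le_nnnorm_mul_nnnorm_one (a : A) :
    spectralRadius 𝕜 a ≤ (‖a‖₊ * ‖(1 : A)‖₊ : ℝ≥0) :=
  iSup₂_le fun _ hk => ENNReal.coe_le_coe.2 (spectrum.norm_le_norm_mul_of_mem hk)

theorem spectralRadius_ne_top (a : A) : spectralRadius 𝕜 a ≠ ⊤ :=
  ne_top_of_le_ne_top ENNReal.coe_ne_top (spectralRadius_le_nnnorm_mul_nnnorm_one a)

end SpectralRadius

section ComplexSpectralRadius

variable {A : Type*} [NormedRing A] [NormedAlgebra ℂ A] [CompleteSpace A]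

theorem spectralRadius_mul_le_of_commute {a b : A} (h : Commute a b) :
    spectralRadius ℂ (a * b) ≤ spectralRadius ℂ a * spectralRadius ℂ b := by
  refine le_of_tendsto_of_tendsto
    (spectrum.pow_nnnorm_pow_one_div_tendsto_nhds_spectralRadius (a * b))
    (ENNReal.Tendsto.mul
      (spectrum.pow_nnnorm_pow_one_div_tendsto_nhds_spectralRadius a)
      (Or.inr (spectralRadius_ne_top b))
      (spectrum.pow_nnnorm_pow_one_div_tendsto_nhds_spectralRadius b)
      (Or.inr (spectralRadius_ne_top a))) (Filter.Eventually.of_forall fun n => ?_)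
  dsimp only
  rw [← ENNReal.mul_rpow_of_nonneg _ _ (by positivity), h.mul_pow]
  gcongr
  exact_mod_cast nnnorm_mul_le (a ^ n) (b ^ n)

theorem spectralRadius_resolvent_mul_lt_one {a b : A} (h : Commute a b) {k : ℂ}
    (hk : spectralRadius ℂ a + spectralRadius ℂ b < ‖k‖₊) :
    spectralRadius ℂ (resolvent a k * b) < 1 := by
  have ha : spectralRadius ℂ a < ‖k‖₊ := le_self_add.trans_lt hk
  have hb : spectralRadius ℂ b < ‖k‖₊ - spectralRadius ℂ a := lt_tsub_iff_left.2 hk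
  have hcomm : Commute (resolvent a k) b := by
    rw [spectrum.resolvent_eq (spectrum.mem_resolventSet_of_spectralRadius_lt ha)]
    exact ((Algebra.commute_algebraMap_left k b).sub_left h).units_inv_left
  calc spectralRadius ℂ (resolvent a k * b)
      ≤ (‖k‖₊ - spectralRadius ℂ a)⁻¹ * spectralRadius ℂ b :=
        (spectralRadius_mul_le_of_commute hcomm).trans
          (mul_le_mul_left (spectralRadius_resolvent_le ha) _)
    _ < 1 := by
        rw [mul_comm, ← div_eq_mul_inv]
        exact ENNReal.div_lt_of_lt_mul (by rwa [one_mul])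

theorem spectralRadius_add_le_of_commute {a b : A} (h : Commute a b) :
    spectralRadius ℂ (a + b) ≤ spectralRadius ℂ a + spectralRadius ℂ b := by
  refine iSup₂_le fun k hk => ?_
  by_contra! hlt
  have hres : k ∈ resolventSet ℂ a :=
    spectrum.mem_resolventSet_of_spectralRadius_lt (le_self_add.trans_lt hlt)
  have hfactor : algebraMap ℂ A k - (a + b) =
      (algebraMap ℂ A k - a) * (1 - resolvent a k * b) := by
    rw [mul_sub, mul_one, ← mul_assoc, resolvent, Ring.mul_inverse_cancel _ hres, one_mul,
      sub_sub]
  refine hk ?_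
  rw [spectrum.mem_resolventSet_iff, hfactor]
  exact hres.mul (isUnit_one_sub_of_spectralRadius_lt_one
    (spectralRadius_resolvent_mul_lt_one h hlt))

theorem isUnit_one_add_mul_of_forall_spectralRadius_add_smul_eq {x : A}
    (hx : ∀ (w : A) (c : ℂ), spectralRadius ℂ (w + c • x) = spectralRadius ℂ w) (z : A) :
    IsUnit (1 + z * x) := by
  obtain ⟨k, hk⟩ : ∃ k : ℂ, spectralRadius ℂ z + spectralRadius ℂ z < ‖k‖₊ := by
    have hz : spectralRadius ℂ z + spectralRadius ℂ z ≠ ⊤ :=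
      ENNReal.add_ne_top.2 ⟨spectralRadius_ne_top z, spectralRadius_ne_top z⟩
    obtain ⟨N, hN⟩ := ENNReal.exists_nat_gt hz
    exact ⟨N, by simpa using hN⟩
  have hk0 : k ≠ 0 := by
    rintro rfl
    simp at hk
  obtain ⟨g, hg⟩ : IsUnit (algebraMap ℂ A k - z) :=
    spectrum.mem_resolventSet_of_spectralRadius_lt (le_self_add.trans_lt hk)
  have hsmall : spectralRadius ℂ (↑g⁻¹ * z) < 1 := by
    simpa [resolvent, ← hg] using spectralRadius_resolvent_mul_lt_one (Commute.refl z) hk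
  have hgx : spectralRadius ℂ (g * x) = 0 := by
    refine spectralRadius_eq_zero_of_forall_isUnit fun c => ?_
    have hunit : IsUnit (1 + (↑g⁻¹ * z + (k * c) • x)) :=
      isUnit_one_add_of_spectralRadius_lt_one ((hx _ _).trans_lt hsmall)
    have hfactor : g * (1 + (↑g⁻¹ * z + (k * c) • x)) = Units.mk0 k hk0 • (1 + c • (g * x)) := by
      rw [mul_add, mul_add, Units.mul_inv_cancel_left, mul_one, mul_smul_comm, Units.smul_mk0,
        smul_add, smul_smul, ← add_assoc, hg, sub_add_cancel, Algebra.algebraMap_eq_smul_one]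
    have hmul := g.isUnit.mul hunit
    rwa [hfactor, isUnit_smul_iff] at hmul
  have hzx : spectralRadius ℂ (-(z * x)) = 0 := by
    rw [← hx _ k, ← hgx, hg, sub_mul, Algebra.algebraMap_eq_smul_one, smul_one_mul, neg_add_eq_sub]
  have hunit := isUnit_one_sub_of_spectralRadius_lt_one (hzx.trans_lt one_pos)
  rwa [sub_neg_eq_add] at hunit

/-- Half of Zemánek's characterisation of the radical. -/
theorem mem_jacobson_bot_of_forall_spectralRadius_add_smul_eq {x : A}
    (hx : ∀ (w : A) (c : ℂ), spectralRadius ℂ (w + c • x) = spectralRadius ℂ w) :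
    x ∈ (⊥ : Ideal A).jacobson := by
  rw [Ideal.mem_jacobson_iff]
  intro z
  obtain ⟨v, hv⟩ := isUnit_one_add_mul_of_forall_spectralRadius_add_smul_eq hx z
  refine ⟨↑v⁻¹, Ideal.mem_bot.2 ?_⟩
  rw [mul_assoc, ← mul_add_one, add_comm (z * x), ← hv, Units.inv_mul, sub_self]

end ComplexSpectralRadius

section ConjugationCurve

variable {A : Type*} [NormedRing A] [NormedAlgebra ℂ A]

/-- The entire curve of conjugates `t ↦ exp (-tu) x exp (tu)`, along which the spectrum is
constant. -/
noncomputable def conjCurve (u x : A) (t : ℂ) : A :=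
  NormedSpace.exp (t • -u) * x * NormedSpace.exp (t • u)

theorem conjCurve_zero (u x : A) : conjCurve u x 0 = x := by
  simp [conjCurve]

variable [CompleteSpace A]

theorem hasDerivAt_conjCurve (u x : A) (t : ℂ) :
    HasDerivAt (conjCurve u x)
      (NormedSpace.exp (t • -u) * -u * x * NormedSpace.exp (t • u) +
        NormedSpace.exp (t • -u) * x * (NormedSpace.exp (t • u) * u)) t :=
  ((hasDerivAt_exp_smul_const (-u) t).mul_const x).mul (hasDerivAt_exp_smul_const u t)

theorem differentiable_conjCurve (u x : A) : Differentiable ℂ (conjCurve u x) :=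
  fun t => (hasDerivAt_conjCurve u x t).differentiableAt

theorem hasDerivAt_conjCurve_zero (u x : A) : HasDerivAt (conjCurve u x) ⁅x, u⁆ 0 := by
  convert hasDerivAt_conjCurve u x 0 using 1
  simp [Ring.lie_def, sub_eq_add_neg, add_comm]

theorem exists_unit_conjCurve_eq (u : A) (t : ℂ) :
    ∃ e : Aˣ, ∀ x : A, conjCurve u x t = ↑e⁻¹ * x * e := by
  let _ : NormedAlgebra ℚ A := NormedAlgebra.restrictScalars ℚ ℂ A
  let _ := NormedSpace.invertibleExp (t • u)
  refine ⟨unitOfInvertible (NormedSpace.exp (t • u)), fun x => ?_⟩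
  rw [val_inv_unitOfInvertible, NormedSpace.invOf_exp, val_unitOfInvertible, conjCurve, smul_neg]

theorem spectralRadius_conjCurve (u x : A) (t : ℂ) :
    spectralRadius ℂ (conjCurve u x t) = spectralRadius ℂ x := by
  obtain ⟨e, he⟩ := exists_unit_conjCurve_eq u t
  rw [spectralRadius, he, spectrum.units_conjugate', spectralRadius]

theorem spectralRadius_conjCurve_add_le {y : A}
    (hy : ∀ w, spectralRadius ℂ (y + w) ≤ spectralRadius ℂ y + spectralRadius ℂ w) (u b : A)
    (t : ℂ) :
    spectralRadius ℂ (conjCurve u y t + b) ≤ spectralRadius ℂ y + spectralRadius ℂ b := by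
  obtain ⟨e, he⟩ := exists_unit_conjCurve_eq u t
  have hconj : ∀ x : A, spectralRadius ℂ (↑e⁻¹ * x * e) = spectralRadius ℂ x := fun x => by
    rw [← he, spectralRadius_conjCurve]
  have hb : ↑e⁻¹ * (e * b * ↑e⁻¹) * e = b := by
    simp only [mul_assoc, Units.inv_mul_cancel_left, Units.inv_mul, mul_one]
  calc spectralRadius ℂ (conjCurve u y t + b) = spectralRadius ℂ (y + e * b * ↑e⁻¹) := by
        rw [← hconj (y + _), mul_add, add_mul, hb, he]
    _ ≤ spectralRadius ℂ y + spectralRadius ℂ (e * b * ↑e⁻¹) := hy _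
    _ = spectralRadius ℂ y + spectralRadius ℂ b := by rw [← hconj (e * b * ↑e⁻¹), hb]

end ConjugationCurve

section Trace

open scoped Matrix.Norms.Operator

variable {m : Type*} [Fintype m] [DecidableEq m]

theorem norm_trace_le_card_mul {M : Matrix m m ℂ} {r : ℝ} (hM : ∀ μ ∈ spectrum ℂ M, ‖μ‖ ≤ r)
    (hr : 0 ≤ r) : ‖M.trace‖ ≤ Fintype.card m * r := by
  have hroot : ∀ s ∈ M.charpoly.roots.map (fun μ => ‖μ‖), s ≤ r := by
    simp only [Multiset.mem_map, forall_exists_index, and_imp, forall_apply_eq_imp_iff₂]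
    exact fun μ hμ =>
      hM μ (Matrix.mem_spectrum_iff_isRoot_charpoly.2 (Polynomial.isRoot_of_mem_roots hμ))
  calc ‖M.trace‖ ≤ (M.charpoly.roots.map fun μ => ‖μ‖).sum := by
        rw [Matrix.trace_eq_sum_roots_charpoly]
        simpa using Multiset.le_sum_of_subadditive (norm : ℂ → ℝ) norm_zero.le norm_add_le
          M.charpoly.roots
    _ ≤ Multiset.card M.charpoly.roots • r := by
        simpa only [Multiset.card_map] using Multiset.sum_le_card_nsmul _ _ hroot
    _ ≤ Fintype.card m * r := by
        rw [nsmul_eq_mul]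
        gcongr
        simpa using Polynomial.card_roots' M.charpoly

theorem norm_trace_pow_le {M : Matrix m m ℂ} {r : ℝ≥0} (hM : spectralRadius ℂ M ≤ r) {k : ℕ}
    (hk : 0 < k) : ‖(M ^ k).trace‖ ≤ Fintype.card m * (r : ℝ) ^ k := by
  refine norm_trace_le_card_mul (fun μ hμ => ?_) (by positivity)
  rw [spectrum.map_pow_of_pos M hk] at hμ
  obtain ⟨ν, hν, rfl⟩ := hμ
  have hνr : ‖ν‖₊ ≤ r := ENNReal.coe_le_coe.1 ((nnnorm_le_spectralRadius_of_mem hν).trans hM)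
  dsimp only
  rw [norm_pow]
  gcongr
  exact hνr

theorem trace_pow_mul_deriv_eq_zero {g : ℂ → Matrix m m ℂ} {g' : Matrix m m ℂ} {z : ℂ}
    (hg : Differentiable ℂ g) (hg' : HasDerivAt g g' z) {k : ℕ} {C : ℝ}
    (hC : ∀ t, ‖(g t ^ (k + 1)).trace‖ ≤ C) : (g z ^ k * g').trace = 0 := by
  let tr : Matrix m m ℂ →L[ℂ] ℂ := LinearMap.toContinuousLinearMap (Matrix.traceLinearMap m ℂ ℂ)
  have hd : Differentiable ℂ fun t => tr (g t ^ (k + 1)) := tr.differentiable.comp (hg.pow _)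
  have hb : Bornology.IsBounded (Set.range fun t => tr (g t ^ (k + 1))) :=
    isBounded_iff_forall_norm_le.2 ⟨C, by rintro _ ⟨t, rfl⟩; exact hC t⟩
  obtain ⟨c, hc⟩ := hd.exists_eq_const_of_bounded hb
  have hderiv : HasDerivAt (fun t => tr (g t ^ (k + 1)))
      (tr (∑ i ∈ Finset.range (k + 1), g z ^ (k - i) * g' * g z ^ i)) z :=
    tr.hasFDerivAt.comp_hasDerivAt z (hg'.fun_pow' (k + 1))
  rw [hc] at hderiv
  have hsum : (∑ i ∈ Finset.range (k + 1), g z ^ (k - i) * g' * g z ^ i).trace = 0 :=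
    hderiv.unique (hasDerivAt_const z c)
  have hterm : ∀ i ∈ Finset.range (k + 1),
      (g z ^ (k - i) * g' * g z ^ i).trace = (g z ^ k * g').trace := fun i hi => by
    rw [Matrix.trace_mul_comm, ← Matrix.mul_assoc, ← pow_add,
      Nat.add_sub_cancel' (Finset.mem_range_succ_iff.1 hi)]
  rw [Matrix.trace_sum, Finset.sum_congr rfl hterm, Finset.sum_const, Finset.card_range,
    smul_eq_zero] at hsum
  exact hsum.resolve_left k.succ_ne_zero

end Trace

theorem continuous_of_norm_apply_self_le {𝕜 E : Type*} [RCLike 𝕜] [NormedAddCommGroup E]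
    [NormedSpace 𝕜 E] {β : E →ₗ[𝕜] E →ₗ[𝕜] 𝕜} (hβ : ∀ x y, β x y = β y x) {C : ℝ}
    (hC : ∀ x, ‖β x x‖ ≤ C * ‖x‖ ^ 2) (y : E) : Continuous (β y) := by
  have hball : ∀ x ∈ Metric.closedBall (0 : E) 1, ‖β y x‖ ≤ |C| * (1 + ‖y‖) ^ 2 := by
    intro x hx
    rw [mem_closedBall_zero_iff] at hx
    have hself : ∀ w : E, ‖w‖ ≤ 1 + ‖y‖ → ‖β w w‖ ≤ |C| * (1 + ‖y‖) ^ 2 := fun w hw =>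
      (hC w).trans (by gcongr; exact le_abs_self C)
    have hpolar : 4 * β y x = β (x + y) (x + y) - β (x - y) (x - y) := by
      simp only [map_add, map_sub, LinearMap.add_apply, LinearMap.sub_apply, hβ x y]
      ring
    have hnorm : 4 * ‖β y x‖ ≤ ‖β (x + y) (x + y)‖ + ‖β (x - y) (x - y)‖ := by
      have h := norm_sub_le (β (x + y) (x + y)) (β (x - y) (x - y))
      rwa [← hpolar, norm_mul, RCLike.norm_ofNat] at h
    have hadd := hself (x + y) ((norm_add_le x y).trans (by gcongr))
    have hsub := hself (x - y) ((norm_sub_le x y).trans (by gcongr))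
    have hnonneg : 0 ≤ |C| * (1 + ‖y‖) ^ 2 := by positivity
    linarith
  exact AddMonoidHomClass.continuous_of_bound (β y) _
    (LinearMap.bound_of_ball_bound' one_pos _ (β y) hball)

theorem exists_bilin_apply_map_eq {K M N P : Type*} [Field K] [AddCommGroup M] [Module K M]
    [AddCommGroup N] [Module K N] [AddCommGroup P] [Module K P] {f : M →ₗ[K] N}
    (hf : Function.Surjective f) (b : M →ₗ[K] M →ₗ[K] P) (hleft : ∀ x y, f x = 0 → b x y = 0)
    (hright : ∀ x y, f y = 0 → b x y = 0) :
    ∃ β : N →ₗ[K] N →ₗ[K] P, ∀ x y, β (f x) (f y) = b x y := by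
  obtain ⟨σ, hσ⟩ := f.exists_rightInverse_of_surjective (LinearMap.range_eq_top.2 hf)
  have hker : ∀ x, f (x - σ (f x)) = 0 := fun x => by
    rw [map_sub, sub_eq_zero]
    exact (LinearMap.congr_fun hσ (f x)).symm
  refine ⟨b.compl₁₂ σ σ, fun x y => ?_⟩
  have hx := hleft _ y (hker x)
  have hy := hright (σ (f x)) _ (hker y)
  rw [map_sub, LinearMap.sub_apply, sub_eq_zero] at hx
  rw [map_sub, sub_eq_zero] at hy
  rw [LinearMap.compl₁₂_apply, hx, hy]

/-- A linear map that does not increase the spectral radius; neither multiplicativity nor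
continuity is assumed. -/
def IsSpectralContraction {A C : Type*} [Ring A] [Algebra ℂ A] [Ring C] [Algebra ℂ C]
    (φ : A →ₗ[ℂ] C) : Prop :=
  ∀ x, spectralRadius ℂ (φ x) ≤ spectralRadius ℂ x

section SpectralContraction

open scoped Matrix.Norms.Operator

variable {A m : Type*} [NormedRing A] [NormedAlgebra ℂ A] [CompleteSpace A] [Fintype m]
  [DecidableEq m]

namespace IsSpectralContraction

variable {φ : A →ₗ[ℂ] Matrix m m ℂ} (hφ : IsSpectralContraction φ)
  (hφsurj : Function.Surjective φ)
include hφ hφsurj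

theorem continuous_of_surjective : Continuous φ := by
  let τ : A →ₗ[ℂ] A →ₗ[ℂ] ℂ :=
    ((LinearMap.mul ℂ (Matrix m m ℂ)).compr₂ (Matrix.traceLinearMap m ℂ ℂ)).compl₁₂ φ φ
  have hτ : ∀ x y, τ x y = (φ x * φ y).trace := fun _ _ => rfl
  have hbound : ∀ x, ‖τ x x‖ ≤ Fintype.card m * ‖(1 : A)‖ ^ 2 * ‖x‖ ^ 2 := fun x => by
    have h := norm_trace_pow_le ((hφ x).trans (spectralRadius_le_nnnorm_mul_nnnorm_one x)) two_pos
    rw [hτ, ← pow_two, mul_assoc, ← mul_pow, mul_comm ‖(1 : A)‖]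
    exact_mod_cast h
  refine continuous_matrix fun i j => ?_
  obtain ⟨y, hy⟩ := hφsurj (Matrix.single j i 1)
  have hentry : ∀ x, φ x i j = τ y x := fun x => by
    rw [hτ, hy, Matrix.trace_single_mul, one_smul]
  simp only [hentry]
  exact continuous_of_norm_apply_self_le (fun x y => Matrix.trace_mul_comm _ _) hbound y

theorem trace_pow_mul_map_lie_eq_zero_of_bounded {x u b : A} {r : ℝ≥0}
    (hr : ∀ t, spectralRadius ℂ (conjCurve u x t + b) ≤ r) (k : ℕ) :
    (φ (x + b) ^ k * φ ⁅x, u⁆).trace = 0 := by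
  let ψ : A →L[ℂ] Matrix m m ℂ := ⟨φ, hφ.continuous_of_surjective hφsurj⟩
  have hd : Differentiable ℂ fun t => ψ (conjCurve u x t + b) :=
    ψ.differentiable.comp ((differentiable_conjCurve u x).add_const b)
  have hd0 : HasDerivAt (fun t => ψ (conjCurve u x t + b)) (ψ ⁅x, u⁆) 0 :=
    ψ.hasFDerivAt.comp_hasDerivAt 0 ((hasDerivAt_conjCurve_zero u x).add_const b)
  have h := trace_pow_mul_deriv_eq_zero hd hd0 fun t =>
    norm_trace_pow_le ((hφ _).trans (hr t)) k.succ_pos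
  rwa [conjCurve_zero] at h

theorem trace_pow_mul_map_lie_eq_zero (x u : A) (k : ℕ) :
    (φ x ^ k * φ ⁅x, u⁆).trace = 0 := by
  have hr : ∀ t, spectralRadius ℂ (conjCurve u x t + 0) ≤ (spectralRadius ℂ x).toNNReal :=
    fun t => by
      rw [add_zero, spectralRadius_conjCurve, ENNReal.coe_toNNReal (spectralRadius_ne_top x)]
  simpa only [add_zero] using hφ.trace_pow_mul_map_lie_eq_zero_of_bounded hφsurj hr k

theorem map_lie_eq_zero_of_spectralRadius_add_le {y : A}
    (hy : ∀ w, spectralRadius ℂ (y + w) ≤ spectralRadius ℂ y + spectralRadius ℂ w) (u : A) :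
    φ ⁅y, u⁆ = 0 := by
  refine Matrix.ext_iff_trace_mul_left.2 fun Z => ?_
  obtain ⟨b, rfl⟩ := hφsurj Z
  have hr : ∀ t, spectralRadius ℂ (conjCurve u y t + b) ≤
      (spectralRadius ℂ y + spectralRadius ℂ b).toNNReal := fun t => by
    rw [ENNReal.coe_toNNReal
      (ENNReal.add_ne_top.2 ⟨spectralRadius_ne_top y, spectralRadius_ne_top b⟩)]
    exact spectralRadius_conjCurve_add_le hy u b t
  have hyb := hφ.trace_pow_mul_map_lie_eq_zero_of_bounded hφsurj hr 1
  have hy0 := hφ.trace_pow_mul_map_lie_eq_zero hφsurj y u 1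
  rw [pow_one] at hyb hy0
  rwa [map_add, add_mul, Matrix.trace_add, hy0, zero_add, ← Matrix.trace_zero m ℂ,
    ← mul_zero (φ b)] at hyb

theorem map_lie_eq_zero_of_map_eq_zero {y : A} (hy : φ y = 0) (u : A) : φ ⁅y, u⁆ = 0 := by
  refine Matrix.ext_iff_trace_mul_left.2 fun Z => ?_
  obtain ⟨x, rfl⟩ := hφsurj Z
  have hx := hφ.trace_pow_mul_map_lie_eq_zero hφsurj x u 1
  have hxy := hφ.trace_pow_mul_map_lie_eq_zero hφsurj (x + y) u 1
  rw [pow_one] at hx hxy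
  have hlie : ⁅x + y, u⁆ = ⁅x, u⁆ + ⁅y, u⁆ := by
    simp only [Ring.lie_def]
    noncomm_ring
  rwa [map_add, hy, add_zero, hlie, map_add, mul_add, Matrix.trace_add, hx, zero_add,
    ← Matrix.trace_zero m ℂ, ← mul_zero (φ x)] at hxy

theorem exists_isTraceNullBracket :
    ∃ β : Matrix m m ℂ →ₗ[ℂ] Matrix m m ℂ →ₗ[ℂ] Matrix m m ℂ,
      IsTraceNullBracket β ∧ ∀ x y, β (φ x) (φ y) = φ ⁅x, y⁆ := by
  let b : A →ₗ[ℂ] A →ₗ[ℂ] Matrix m m ℂ :=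
    (LinearMap.mul ℂ A - (LinearMap.mul ℂ A).flip).compr₂ φ
  have hb : ∀ x y, b x y = φ ⁅x, y⁆ := fun _ _ => rfl
  have hker : ∀ x y, φ x = 0 → b x y = 0 := fun x y hx =>
    hφ.map_lie_eq_zero_of_map_eq_zero hφsurj hx y
  have hskew : ∀ x y, b x y = -b y x := fun x y => by
    rw [hb, hb, ← map_neg, Ring.lie_def, Ring.lie_def, neg_sub]
  obtain ⟨β, hβ⟩ := exists_bilin_apply_map_eq hφsurj b hker fun x y hy => by
    rw [hskew, hker y x hy, neg_zero]
  refine ⟨β, ⟨fun X => ?_, fun X U => ?_, fun X U => ?_⟩, hβ⟩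
  · obtain ⟨x, rfl⟩ := hφsurj X
    rw [hβ, hb, Ring.lie_def, sub_self, map_zero]
  · obtain ⟨⟨x, rfl⟩, u, rfl⟩ := And.intro (hφsurj X) (hφsurj U)
    simpa only [hβ, hb, pow_one] using hφ.trace_pow_mul_map_lie_eq_zero hφsurj x u 1
  · obtain ⟨⟨x, rfl⟩, u, rfl⟩ := And.intro (hφsurj X) (hφsurj U)
    simpa only [hβ, hb, pow_two] using hφ.trace_pow_mul_map_lie_eq_zero hφsurj x u 2

end IsSpectralContraction

end SpectralContraction

/-- A linear map that preserves the spectral radius, not assumed unital or injective. -/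
def IsSpectralIsometry {A B : Type*} [Ring A] [Algebra ℂ A] [Ring B] [Algebra ℂ B]
    (T : A →ₗ[ℂ] B) : Prop :=
  ∀ a, spectralRadius ℂ (T a) = spectralRadius ℂ a

namespace IsSpectralIsometry

variable {A B : Type*} [NormedRing A] [NormedAlgebra ℂ A] [CompleteSpace A]

theorem injective [Ring B] [Algebra ℂ B] {T : A →ₗ[ℂ] B} (hT : IsSpectralIsometry T)
    (hA : (⊥ : Ideal A).jacobson = ⊥) : Function.Injective T := by
  rw [injective_iff_map_eq_zero]
  intro x hx
  rw [← Ideal.mem_bot, ← hA]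
  refine mem_jacobson_bot_of_forall_spectralRadius_add_smul_eq fun w c => ?_
  rw [← hT, ← hT w, map_add, map_smul, hx, smul_zero, add_zero]

section Separating

variable [NormedRing B] [NormedAlgebra ℂ B] {T : A →ₗ[ℂ] B} (hT : IsSpectralIsometry T)
  (hTsurj : Function.Surjective T) {ι : Type*} {m : ι → Type*} [∀ i, Fintype (m i)]
  [∀ i, DecidableEq (m i)] {π : ∀ i, B →ₐ[ℂ] Matrix (m i) (m i) ℂ}
  (hπsurj : ∀ i, Function.Surjective (π i))
include hT hTsurj hπsurj

theorem exists_isTraceNullBracket (i : ι) :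
    ∃ β : Matrix (m i) (m i) ℂ →ₗ[ℂ] Matrix (m i) (m i) ℂ →ₗ[ℂ] Matrix (m i) (m i) ℂ,
      IsTraceNullBracket β ∧ ∀ x y, β (π i (T x)) (π i (T y)) = π i (T ⁅x, y⁆) :=
  IsSpectralContraction.exists_isTraceNullBracket (φ := (π i).toLinearMap ∘ₗ T)
    (fun x => (spectralRadius_algHom_apply_le (π i) (T x)).trans (hT x).le)
    ((hπsurj i).comp hTsurj)

variable (hsep : ∀ b : B, (∀ i, π i b = 0) → b = 0)
include hsep

theorem map_mem_center [CompleteSpace B] {s : A} (hs : s ∈ Set.center A) :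
    T s ∈ Set.center B := by
  refine Semigroup.mem_center_iff.2 fun u => Eq.symm (sub_eq_zero.1 (hsep _ fun i => ?_))
  refine IsSpectralContraction.map_lie_eq_zero_of_spectralRadius_add_le
    (φ := (π i).toLinearMap) (spectralRadius_algHom_apply_le (π i)) (hπsurj i) (fun w => ?_) u
  obtain ⟨a, rfl⟩ := hTsurj w
  rw [← map_add, hT, hT, hT]
  exact spectralRadius_add_le_of_commute (Semigroup.mem_center_iff.1 hs a).symm

theorem commute_of_commute_map (hA : (⊥ : Ideal A).jacobson = ⊥) {x y : A}
    (hxy : Commute (T x) (T y)) : Commute x y := by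
  rw [commute_iff_lie_eq, ← map_eq_zero_iff T (hT.injective hA)]
  refine hsep _ fun i => ?_
  obtain ⟨β, hβ, hβπ⟩ := hT.exists_isTraceNullBracket hTsurj hπsurj i
  rw [← hβπ]
  by_cases h0 : β = 0
  · rw [h0, LinearMap.zero_apply, LinearMap.zero_apply]
  · exact (hβ.apply_eq_zero_iff_commute h0).2 (hxy.map (π i))

theorem mem_center_of_map_eq_lie (hA : (⊥ : Ideal A).jacobson = ⊥) {x y s : A}
    (hxy : Commute x y) (hs : T s = ⁅T x, T y⁆) : s ∈ Set.center A := by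
  refine Semigroup.mem_center_iff.2 fun w => Eq.symm (sub_eq_zero.1 ?_)
  refine (map_eq_zero_iff T (hT.injective hA)).1 (hsep _ fun i => ?_)
  change π i (T ⁅s, w⁆) = 0
  obtain ⟨β, hβ, hβπ⟩ := hT.exists_isTraceNullBracket hTsurj hπsurj i
  rw [← hβπ]
  by_cases h0 : β = 0
  · rw [h0, LinearMap.zero_apply, LinearMap.zero_apply]
  · have hcomm : Commute (π i (T x)) (π i (T y)) := by
      rw [← hβ.apply_eq_zero_iff_commute h0, hβπ, commute_iff_lie_eq.1 hxy, map_zero, map_zero]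
    rw [hs, Ring.lie_def, map_sub, map_mul, map_mul, hcomm.eq, sub_self, map_zero,
      LinearMap.zero_apply]

theorem commute_map [CompleteSpace B] (hA : (⊥ : Ideal A).jacobson = ⊥) {x y : A}
    (hxy : Commute x y) : Commute (T x) (T y) := by
  obtain ⟨s, hs⟩ := hTsurj ⁅T x, T y⁆
  have hcenter : ⁅T x, T y⁆ ∈ Set.center B :=
    hs ▸ hT.map_mem_center hTsurj hπsurj hsep
      (hT.mem_center_of_map_eq_lie hTsurj hπsurj hsep hA hxy hs)
  refine commute_iff_lie_eq.2 (hsep _ fun i => ?_)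
  refine matrix_eq_zero_of_mem_center_of_trace_eq_zero
    (Semigroup.mem_center_iff.2 fun X => ?_) ?_
  · obtain ⟨b, rfl⟩ := hπsurj i X
    rw [← map_mul, ← map_mul, Semigroup.mem_center_iff.1 hcenter]
  · rw [Ring.lie_def, map_sub, map_mul, map_mul, Matrix.trace_sub, Matrix.trace_mul_comm, sub_self]

theorem image_centralizer [CompleteSpace B] (hA : (⊥ : Ideal A).jacobson = ⊥) (S : Set A) :
    T '' Set.centralizer S = Set.centralizer (T '' S) := by
  ext y
  obtain ⟨x, rfl⟩ := hTsurj y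
  rw [(hT.injective hA).mem_set_image, Set.mem_centralizer_iff, Set.mem_centralizer_iff,
    Set.forall_mem_image]
  exact forall₂_congr fun s _ =>
    ⟨hT.commute_map hTsurj hπsurj hsep hA, hT.commute_of_commute_map hTsurj hπsurj hsep hA⟩

end Separating

end IsSpectralIsometry

theorem image_of_double_commutant_is_closed_subalgebra_general
    {A B : Type*} [NormedRing A] [NormedAlgebra ℂ A] [CompleteSpace A]
    [NormedRing B] [NormedAlgebra ℂ B] [CompleteSpace B]
    (hA : (⊥ : Ideal A).jacobson = ⊥)
    {ι : Type*} {m : ι → Type*} [∀ i, Fintype (m i)] [∀ i, DecidableEq (m i)]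
    (π : ∀ i, B →ₐ[ℂ] Matrix (m i) (m i) ℂ)
    (hπsurj : ∀ i, Function.Surjective (π i))
    (hsep : ∀ b : B, (∀ i, π i b = 0) → b = 0)
    (T : A →ₗ[ℂ] B) (hTsurj : Function.Surjective T)
    (hρ : ∀ a : A, spectralRadius ℂ (T a) = spectralRadius ℂ a)
    (S : Set A) :
    IsClosed (T '' Set.centralizer S) ∧
      (1 : B) ∈ T '' Set.centralizer S ∧
      ∀ b₁ ∈ T '' Set.centralizer S, ∀ b₂ ∈ T '' Set.centralizer S,
        b₁ * b₂ ∈ T '' Set.centralizer S := by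
  rw [IsSpectralIsometry.image_centralizer hρ hTsurj hπsurj hsep hA S]
  exact ⟨Set.isClosed_centralizer _, Set.one_mem_centralizer, fun _ h₁ _ h₂ =>
    Set.mul_mem_centralizer h₁ h₂⟩

/-- Under the hypotheses of the main theorem, the image under `T` of the
double commutant of a single element `a ∈ A` is a closed unital subalgebra of `B`;
in particular it is closed under multiplication. -/
theorem image_of_double_commutant_is_closed_subalgebra
    {A B : Type*} [NormedRing A] [NormedAlgebra ℂ A] [CompleteSpace A]
    [NormedRing B] [NormedAlgebra ℂ B] [CompleteSpace B]
    (hA : (⊥ : Ideal A).jacobson = ⊥)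
    {ι : Type*} (n : ι → ℕ) (hn : ∀ i, 0 < n i)
    (π : ∀ i, B →ₐ[ℂ] Matrix (Fin (n i)) (Fin (n i)) ℂ)
    (hπcont : ∀ i, Continuous (π i))
    (hπsurj : ∀ i, Function.Surjective (π i))
    (hsep : ∀ b : B, (∀ i, π i b = 0) → b = 0)
    (T : A →ₗ[ℂ] B) (hTsurj : Function.Surjective T) (hT1 : T 1 = 1)
    (hρ : ∀ a : A, spectralRadius ℂ (T a) = spectralRadius ℂ a)
    (a : A) :
    IsClosed (T '' Set.centralizer (Set.centralizer {a})) ∧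
      (1 : B) ∈ T '' Set.centralizer (Set.centralizer {a}) ∧
      ∀ b₁ ∈ T '' Set.centralizer (Set.centralizer {a}),
        ∀ b₂ ∈ T '' Set.centralizer (Set.centralizer {a}),
          b₁ * b₂ ∈ T '' Set.centralizer (Set.centralizer {a}) :=
  image_of_double_commutant_is_closed_subalgebra_general hA π hπsurj hsep T hTsurj hρ _
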